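/- For any positive integer n, there is a constant C_n > 0 such that for all integers K ≥ 3, with X = π(Kn), the number of positive integers a ≤ X not in A_n = {π(kn) : k ∈ ℤ⁺} is at most C_n · X / log X. -/

import Mathlib

/-!
If `a ≤ X = π (K * n)` is not of the form `π (k * n)`, no multiple of `n` lies between the `a`-th
prime `p` and the next prime `q`, so `q = p + h` with `1 ≤ h < n` (`card_missing_le`). With
`N = K * n`, it therefore suffices to bound the number of primes `p ≤ N` with `p + h` prime by
`O_h(N / (log N) ^ 2)` for each fixed `h` (`prime_pairs_bound`). Chebyshev's lower bound
`π N ≥ N / (5 * log N)` (`primeCounting_lower`) turns this into `O_n(X / log X)`.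

The prime pairs are bounded by Selberg's sieve, applied to the products `m * (m + h)` with `m ≤ N`
and the primes `p ≤ z` not dividing `2 * h`. Mathlib diagonalises the main term of a `Λ²` sieve; the
optimal weights give the bound `N / S + z ^ 6` (`BoundingSieve.siftedSum_le_selberg`), where `S` is
the sum of `g l` over the moduli `l ≤ z`. Since `g l ≥ 2 ^ ω(l) / l`, the sum `S` dominates a
constant times the square of the sum of `1 / a` over `a ≤ √z` coprime to `2 * h`, so it is of order
at least `(log z) ^ 2` (`selbergSum_pairSieve_ge`). Taking `z` to be a small power of `N` makes the
error term negligible.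
-/

/-! ### Selberg's optimal weights -/

open Finset in
/-- Möbius inversion over the interval from `l` to `m` in the divisor lattice: the sum of `μ d` over
`l ∣ d ∣ m` vanishes unless `l = m`. It inverts the change of variables that diagonalises the
main term. -/
theorem sum_moebius_between {P l m : ℕ} (hP : Squarefree P) (hm : m ∈ P.divisors) :
    (∑ d ∈ P.divisors, if l ∣ d ∧ d ∣ m then (ArithmeticFunction.moebius d : ℝ) else 0)
      = if l = m then (ArithmeticFunction.moebius l : ℝ) else 0 := by
  have hP0 : P ≠ 0 := hP.ne_zero
  have hmP : m ∣ P := Nat.dvd_of_mem_divisors hm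
  have hm0 : m ≠ 0 := ne_zero_of_dvd_ne_zero hP0 hmP
  have hmsq : Squarefree m := hP.squarefree_of_dvd hmP
  by_cases hlm : l ∣ m
  · obtain ⟨k, rfl⟩ := hlm
    have hl0 : l ≠ 0 := left_ne_zero_of_mul hm0
    have hk0 : k ≠ 0 := right_ne_zero_of_mul hm0
    have key : (∑ d ∈ P.divisors, if l ∣ d ∧ d ∣ l * k then (ArithmeticFunction.moebius d : ℝ)
        else 0) = ∑ e ∈ k.divisors, (ArithmeticFunction.moebius (l * e) : ℝ) := by
      rw [← sum_filter]
      symm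
      apply sum_bij (fun e _ => l * e)
      · intro e he
        have := Nat.mul_dvd_mul_left l (Nat.dvd_of_mem_divisors he)
        simp only [mem_filter, Nat.mem_divisors]
        exact ⟨⟨this.trans hmP, hP0⟩, dvd_mul_right _ _, this⟩
      · intro a _ b _ h
        exact Nat.eq_of_mul_eq_mul_left (Nat.pos_of_ne_zero hl0) h
      · intro b hb
        simp only [mem_filter, Nat.mem_divisors] at hb
        obtain ⟨e, rfl⟩ := hb.2.1
        exact ⟨e, by simpa [hk0] using Nat.dvd_of_mul_dvd_mul_left (Nat.pos_of_ne_zero hl0) hb.2.2,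
          rfl⟩
      · intros; rfl
    rw [key]
    have h2 : ∀ e ∈ k.divisors, (ArithmeticFunction.moebius (l * e) : ℝ)
        = ArithmeticFunction.moebius l * ArithmeticFunction.moebius e := by
      intro e he
      have hc : l.Coprime e :=
        (Nat.coprime_of_squarefree_mul hmsq).coprime_dvd_right (Nat.dvd_of_mem_divisors he)
      rw [ArithmeticFunction.isMultiplicative_moebius.map_mul_of_coprime hc]
      push_cast; rfl
    rw [sum_congr rfl h2, ← mul_sum]
    have h3 : (∑ e ∈ k.divisors, (ArithmeticFunction.moebius e : ℝ)) = if k = 1 then 1 else 0 := by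
      have := ArithmeticFunction.coe_mul_zeta_apply (f := ArithmeticFunction.moebius) (x := k)
      rw [ArithmeticFunction.moebius_mul_coe_zeta, ArithmeticFunction.one_apply] at this
      exact_mod_cast this.symm
    rw [h3]
    have : l = l * k ↔ k = 1 := by
      constructor
      · intro h; exact (Nat.eq_of_mul_eq_mul_left (Nat.pos_of_ne_zero hl0) (by simpa using h)).symm
      · rintro rfl; simp
    by_cases hk : k = 1 <;> simp [this, hk]
  · have : l ≠ m := by rintro rfl; exact hlm dvd_rfl
    rw [if_neg this]
    apply sum_eq_zero
    intro d _
    rw [if_neg]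
    rintro ⟨h1, h2⟩
    exact hlm (h1.trans h2)

namespace BoundingSieve
open Finset

/-- The denominator in Selberg's upper bound: the sum of `g l` over the sifting moduli `l ≤ z`,
where `g` is `selbergTerms`. -/
noncomputable def selbergSum (s : BoundingSieve) (z : ℕ) : ℝ :=
  ∑ l ∈ s.prodPrimes.divisors with l ≤ z, s.selbergTerms l

/-- Selberg's weights of level `z`, that is, those for which the diagonalised variable
`∑ l ∣ d, ν d * w d` equals `μ l * g l / selbergSum` for `l ≤ z` and `0` for `l > z`. -/
noncomputable def selbergWeight (s : BoundingSieve) (z d : ℕ) : ℝ :=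
  (s.nu d)⁻¹ * ArithmeticFunction.moebius d *
    (∑ l ∈ s.prodPrimes.divisors with l ≤ z, if d ∣ l then s.selbergTerms l else 0)
      / s.selbergSum z

variable {s : BoundingSieve} {z : ℕ}

theorem selbergSum_pos (hz : 1 ≤ z) : 0 < s.selbergSum z := by
  apply sum_pos
  · intro l hl
    exact selbergTerms_pos (Nat.dvd_of_mem_divisors (mem_filter.mp hl).1)
  · exact ⟨1, by simp [hz, prodPrimes_ne_zero]⟩

theorem selbergWeight_one (hz : 1 ≤ z) : s.selbergWeight z 1 = 1 := by
  have := (selbergSum_pos (s := s) hz).ne'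
  simp [selbergWeight, s.nu_mult.map_one]
  exact div_self this

theorem selbergWeight_eq_zero {d : ℕ} (hd : z < d) : s.selbergWeight z d = 0 := by
  unfold selbergWeight
  rw [sum_eq_zero, mul_zero, zero_div]
  intro l hl
  simp only [mem_filter, Nat.mem_divisors] at hl
  rw [if_neg]
  intro h
  have := Nat.le_of_dvd (Nat.pos_of_ne_zero (ne_zero_of_dvd_ne_zero hl.1.2 hl.1.1)) h
  omega

/-- A bound cruder than the classical `|w d| ≤ 1`, but immediate; it costs only a power of `z` in
the error term. -/
theorem abs_selbergWeight_le (hz : 1 ≤ z) {d : ℕ} (hd : d ∣ s.prodPrimes) :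
    |s.selbergWeight z d| ≤ (s.nu d)⁻¹ := by
  have hS := selbergSum_pos (s := s) hz
  have hnu := nu_pos_of_dvd_prodPrimes hd
  set T := (∑ l ∈ s.prodPrimes.divisors with l ≤ z, if d ∣ l then s.selbergTerms l else 0) with hT
  have hpos : ∀ l ∈ s.prodPrimes.divisors.filter (· ≤ z), 0 < s.selbergTerms l := fun l hl =>
    selbergTerms_pos (Nat.dvd_of_mem_divisors (mem_filter.mp hl).1)
  have hT0 : 0 ≤ T := sum_nonneg fun l hl => by
    split_ifs
    · exact (hpos l hl).le
    · exact le_rfl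
  have hTS : T ≤ s.selbergSum z := sum_le_sum fun l hl => by
    split_ifs
    · exact le_rfl
    · exact (hpos l hl).le
  have hmu : |(ArithmeticFunction.moebius d : ℝ)| ≤ 1 := by
    exact_mod_cast ArithmeticFunction.abs_moebius_le_one
  unfold selbergWeight
  rw [← hT, abs_div, abs_mul, abs_mul, abs_of_pos hS, abs_of_nonneg hT0, abs_of_pos (inv_pos.2 hnu),
    div_le_iff₀ hS]
  have := inv_pos.2 hnu
  calc _ ≤ (s.nu d)⁻¹ * 1 * s.selbergSum z := by gcongr
    _ = _ := by ring

theorem mainSum_selbergWeight (hz : 1 ≤ z) :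
    s.mainSum (lambdaSquared (s.selbergWeight z)) = (s.selbergSum z)⁻¹ := by
  have hS := selbergSum_pos (s := s) hz
  rw [mainSum_lambdaSquared_eq_sum_mul_sum_sq]
  -- The diagonalised variables are computed by swapping the sums and inverting.
  have hy : ∀ l ∈ s.prodPrimes.divisors,
      (∑ d ∈ s.prodPrimes.divisors, if l ∣ d then s.nu d * s.selbergWeight z d else 0)
        = if l ≤ z then ArithmeticFunction.moebius l * s.selbergTerms l / s.selbergSum z else 0 := by
    intro l hl
    calc _ = ∑ d ∈ s.prodPrimes.divisors, ∑ m ∈ s.prodPrimes.divisors with m ≤ z,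
          (if l ∣ d ∧ d ∣ m then (ArithmeticFunction.moebius d : ℝ) else 0)
            * (s.selbergTerms m / s.selbergSum z) := by
          refine sum_congr rfl fun d hd => ?_
          have hnu := nu_ne_zero (Nat.dvd_of_mem_divisors hd)
          split_ifs with h
          · unfold selbergWeight
            rw [mul_sum, sum_div, mul_sum]
            refine sum_congr rfl fun m _ => ?_
            by_cases hdm : d ∣ m
            · simp only [hdm, h, and_self, if_true]
              field_simp
            · simp [hdm]
          · simp [h]
      _ = ∑ m ∈ s.prodPrimes.divisors with m ≤ z,
            (if l = m then (ArithmeticFunction.moebius l : ℝ) else 0)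
              * (s.selbergTerms m / s.selbergSum z) := by
          rw [sum_comm]
          refine sum_congr rfl fun m hm => ?_
          rw [← sum_mul, sum_moebius_between s.prodPrimes_squarefree (mem_filter.mp hm).1]
      _ = _ := by
          simp only [ite_mul, zero_mul, sum_ite_eq, mem_filter, hl, true_and, mul_div_assoc]
  rw [sum_congr rfl fun l hl => by rw [hy l hl]]
  have : ∀ l ∈ s.prodPrimes.divisors, (s.selbergTerms l)⁻¹ *
      (if l ≤ z then ArithmeticFunction.moebius l * s.selbergTerms l / s.selbergSum z else 0) ^ 2
      = if l ≤ z then s.selbergTerms l / s.selbergSum z ^ 2 else 0 := by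
    intro l hl
    have hg := (selbergTerms_pos (s := s) (Nat.dvd_of_mem_divisors hl)).ne'
    have hsq := squarefree_of_mem_divisors_prodPrimes hl
    have hmu : (ArithmeticFunction.moebius l : ℝ) ^ 2 = 1 := by
      exact_mod_cast ArithmeticFunction.moebius_sq_eq_one_of_squarefree hsq
    split_ifs
    · rw [div_pow, mul_pow, hmu]; field_simp
    · simp
  rw [sum_congr rfl this, ← sum_filter, ← sum_div]
  change s.selbergSum z / _ = _
  field_simp

/-- Each of the at most `z ^ 2` pairs `(d1, d2)` with `d1, d2 ≤ z` contributes at most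
`d1 * d2 * lcm d1 d2 ≤ z ^ 4`. -/
theorem errSum_selbergWeight_le (hz : 1 ≤ z)
    (hnu : ∀ d, d ∣ s.prodPrimes → (s.nu d)⁻¹ ≤ d)
    (hrem : ∀ d, d ∣ s.prodPrimes → |s.rem d| ≤ d) :
    s.errSum (lambdaSquared (s.selbergWeight z)) ≤ (z : ℝ) ^ 6 := by
  have hP0 := prodPrimes_ne_zero (s := s)
  have hw : ∀ d, d ∣ s.prodPrimes → |s.selbergWeight z d| ≤ if d ≤ z then (d : ℝ) else 0 := by
    intro d hd
    split_ifs with h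
    · exact (abs_selbergWeight_le hz hd).trans (hnu d hd)
    · rw [selbergWeight_eq_zero (by omega)]; simp
  set D := s.prodPrimes.divisors.filter (· ≤ z) with hD
  have hcard : (#D : ℝ) ≤ z := by
    have : D ⊆ Icc 1 z := fun d hd => by
      simp only [hD, mem_filter, Nat.mem_divisors] at hd
      rw [mem_Icc]
      exact ⟨Nat.pos_of_ne_zero (ne_zero_of_dvd_ne_zero hP0 hd.1.1), hd.2⟩
    have := card_le_card this
    simp at this
    exact_mod_cast this
  calc s.errSum (lambdaSquared (s.selbergWeight z))
      ≤ ∑ d ∈ s.prodPrimes.divisors, ∑ d1 ∈ s.prodPrimes.divisors, ∑ d2 ∈ s.prodPrimes.divisors,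
        if d = d1.lcm d2 then (if d1 ≤ z then (d1 : ℝ) else 0) * (if d2 ≤ z then (d2 : ℝ) else 0)
          * d else 0 := by
        unfold errSum
        refine sum_le_sum fun d hd => ?_
        have hdP := Nat.dvd_of_mem_divisors hd
        have hsub : d.divisors ⊆ s.prodPrimes.divisors := Nat.divisors_subset_of_dvd hP0 hdP
        calc _ ≤ (∑ d1 ∈ d.divisors, ∑ d2 ∈ d.divisors, if d = Nat.lcm d1 d2 then
                  (if d1 ≤ z then (d1 : ℝ) else 0) * (if d2 ≤ z then (d2 : ℝ) else 0) else 0) * d := by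
              refine mul_le_mul ?_ (hrem d hdP) (abs_nonneg _) ?_
              · unfold lambdaSquared
                refine (abs_sum_le_sum_abs _ _).trans (sum_le_sum fun d1 h1 => ?_)
                refine (abs_sum_le_sum_abs _ _).trans (sum_le_sum fun d2 h2 => ?_)
                split_ifs with h
                all_goals first
                  | (rw [abs_mul]
                     refine mul_le_mul ?_ ?_ (abs_nonneg _) ?_
                     · simpa [*] using hw d1 ((Nat.dvd_of_mem_divisors h1).trans hdP)
                     · simpa [*] using hw d2 ((Nat.dvd_of_mem_divisors h2).trans hdP)
                     · positivity)
                  | simp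
              · positivity
          _ = ∑ d1 ∈ d.divisors, ∑ d2 ∈ d.divisors, if d = Nat.lcm d1 d2 then
                  (if d1 ≤ z then (d1 : ℝ) else 0) * (if d2 ≤ z then (d2 : ℝ) else 0) * d else 0 := by
              simp_rw [sum_mul, ite_mul, zero_mul]
          _ ≤ ∑ d1 ∈ s.prodPrimes.divisors, ∑ d2 ∈ d.divisors, if d = Nat.lcm d1 d2 then
                  (if d1 ≤ z then (d1 : ℝ) else 0) * (if d2 ≤ z then (d2 : ℝ) else 0) * d else 0 := by
              refine sum_le_sum_of_subset_of_nonneg hsub fun _ _ _ => sum_nonneg fun _ _ => ?_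
              positivity
          _ ≤ _ := by
              refine sum_le_sum fun _ _ => sum_le_sum_of_subset_of_nonneg hsub fun _ _ _ => ?_
              positivity
    _ = ∑ d1 ∈ s.prodPrimes.divisors, ∑ d2 ∈ s.prodPrimes.divisors,
          (if d1 ≤ z then (d1 : ℝ) else 0) * (if d2 ≤ z then (d2 : ℝ) else 0)
            * (d1.lcm d2 : ℕ) := by
        rw [sum_comm]
        refine sum_congr rfl fun d1 h1 => ?_
        rw [sum_comm]
        refine sum_congr rfl fun d2 h2 => ?_
        rw [sum_ite_eq_of_mem']
        exact Nat.mem_divisors.2 ⟨Nat.lcm_dvd (Nat.dvd_of_mem_divisors h1)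
          (Nat.dvd_of_mem_divisors h2), hP0⟩
    _ ≤ ∑ d1 ∈ s.prodPrimes.divisors, ∑ d2 ∈ s.prodPrimes.divisors,
          (if d1 ≤ z then (if d2 ≤ z then (z : ℝ) ^ 4 else 0) else 0) := by
        refine sum_le_sum fun d1 h1 => sum_le_sum fun d2 h2 => ?_
        split_ifs with hz1 hz2
        · have : ((d1.lcm d2 : ℕ) : ℝ) ≤ z * z := by
            have : d1.lcm d2 ≤ d1 * d2 :=
              Nat.le_of_dvd (Nat.mul_pos (Nat.pos_of_mem_divisors h1) (Nat.pos_of_mem_divisors h2))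
                (Nat.lcm_dvd_mul _ _)
            exact_mod_cast this.trans (Nat.mul_le_mul hz1 hz2)
          calc _ ≤ (z : ℝ) * z * (z * z) := by gcongr
            _ = _ := by ring
        all_goals simp
    _ = #D * (#D * (z : ℝ) ^ 4) := by
        simp_rw [← ite_sum_zero, ← sum_filter, sum_const, nsmul_eq_mul]
        rw [hD]
    _ ≤ z * (z * (z : ℝ) ^ 4) := by gcongr
    _ = _ := by ring

/-- Selberg's upper bound with a crude error term. -/
theorem siftedSum_le_selberg (hz : 1 ≤ z)
    (hnu : ∀ d, d ∣ s.prodPrimes → (s.nu d)⁻¹ ≤ d)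
    (hrem : ∀ d, d ∣ s.prodPrimes → |s.rem d| ≤ d) :
    s.siftedSum ≤ s.totalMass / s.selbergSum z + (z : ℝ) ^ 6 := by
  refine (siftedSum_le_mainSum_errSum_of_upperMoebius _
    (upperMoebius_lambdaSquared _ (selbergWeight_one (s := s) hz))).trans ?_
  rw [mainSum_selbergWeight hz, ← div_eq_mul_inv]
  gcongr
  exact errSum_selbergWeight_le hz hnu hrem

end BoundingSieve

section
open Finset

/-! ### The sieve problem for prime pairs -/

/-- The number of roots modulo `d` of the polynomial `x * (x + h)`. -/
noncomputable def rootCount (h d : ℕ) : ℕ := Nat.card {x : ZMod d // x * (x + h) = 0}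

theorem rootCount_mul (h : ℕ) {m n : ℕ} (hmn : m.Coprime n) :
    rootCount h (m * n) = rootCount h m * rootCount h n := by
  unfold rootCount
  rw [← Nat.card_prod]
  let e := ZMod.chineseRemainder hmn
  refine Nat.card_congr ((e.toEquiv.subtypeEquiv (q := fun y : ZMod m × ZMod n =>
    y.1 * (y.1 + h) = 0 ∧ y.2 * (y.2 + h) = 0) fun a => ?_).trans
      (Equiv.subtypeProdEquivProd (p := fun y : ZMod m => y * (y + h) = 0)
        (q := fun y : ZMod n => y * (y + h) = 0)))
  rw [← e.map_eq_zero_iff, map_mul, map_add, map_natCast, Prod.ext_iff]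
  simp

theorem rootCount_one (h : ℕ) : rootCount h 1 = 1 := by
  unfold rootCount
  rw [Nat.card_eq_one_iff_unique]
  exact ⟨⟨fun a b => Subtype.ext (Subsingleton.elim (α := ZMod 1) _ _)⟩, ⟨⟨0, by simp⟩⟩⟩

theorem rootCount_prime {h p : ℕ} (hp : p.Prime) (hph : ¬ p ∣ h) : rootCount h p = 2 := by
  have := Fact.mk hp
  have hne : (0 : ZMod p) ≠ -(h : ZMod p) := by
    intro H
    apply hph
    rw [← ZMod.natCast_eq_zero_iff]
    simpa using H.symm
  have : {x : ZMod p | x * (x + h) = 0} = {0, -(h : ZMod p)} := by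
    ext x
    simp [add_eq_zero_iff_eq_neg]
  unfold rootCount
  rw [← Set.ncard_pair hne, ← this]
  rfl

theorem rootCount_pos (h : ℕ) {d : ℕ} (hd : d ≠ 0) : 0 < rootCount h d := by
  have := NeZero.mk hd
  have : Nonempty {x : ZMod d // x * (x + h) = 0} := ⟨⟨0, by simp⟩⟩
  exact Nat.card_pos

theorem card_roots_Ico (h a : ℕ) {d : ℕ} (hd : d ≠ 0) :
    #{m ∈ Ico a (a + d) | d ∣ m * (m + h)} = rootCount h d := by
  have := NeZero.mk hd
  rw [Nat.filter_Ico_card_eq_of_periodic _ _ (fun m => d ∣ m * (m + h)), Nat.count_eq_card_filter_range]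
  · unfold rootCount
    rw [Nat.subtype_card (univ.filter fun x : ZMod d => x * (x + h) = 0) (by simp)]
    refine card_bij' (fun m _ => (m : ZMod d)) (fun x _ => x.val) ?_ ?_ ?_ ?_
    · intro m hm
      have := (mem_filter.mp hm).2
      rw [← ZMod.natCast_eq_zero_iff] at this
      simpa using this
    · intro x hx
      rw [mem_filter, mem_range, ← ZMod.natCast_eq_zero_iff]
      exact ⟨ZMod.val_lt x, by simpa using hx⟩
    · intro m hm
      exact ZMod.val_cast_of_lt (mem_range.mp (mem_filter.mp hm).1)
    · intro x hx
      simp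
  · intro m
    simp only [eq_iff_iff]
    rw [← ZMod.natCast_eq_zero_iff, ← ZMod.natCast_eq_zero_iff]
    simp

theorem rootCount_le (h : ℕ) {d : ℕ} (hd : d ≠ 0) : rootCount h d ≤ d := by
  rw [← card_roots_Ico h 0 hd]
  exact (card_filter_le _ _).trans (by simp)

theorem card_roots_blocks (h : ℕ) {d : ℕ} (hd : d ≠ 0) (q : ℕ) :
    #{m ∈ Ico 1 (1 + d * q) | d ∣ m * (m + h)} = q * rootCount h d := by
  induction q with
  | zero => simp
  | succ q ih =>
    rw [← Ico_union_Ico_eq_Ico (b := 1 + d * q) (by omega) (by gcongr; omega), filter_union,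
      card_union_of_disjoint, ih]
    · rw [show 1 + d * (q + 1) = (1 + d * q) + d by ring, card_roots_Ico h _ hd]; ring
    · exact disjoint_filter_filter (Ico_disjoint_Ico_consecutive _ _ _)

/-- The roots in `[1, N]` fill `N / d` complete periods, with fewer than `d` further integers. -/
theorem abs_card_roots_sub_le (h N : ℕ) {d : ℕ} (hd : d ≠ 0) :
    |(#{m ∈ Icc 1 N | d ∣ m * (m + h)} : ℝ) - rootCount h d / d * N| ≤ d := by
  have hd' : (0 : ℝ) < d := by positivity
  set q := N / d
  set r := N % d
  have hN : d * q + r = N := Nat.div_add_mod N d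
  have hr : r < d := Nat.mod_lt _ (by omega)
  have hle : q * rootCount h d ≤ #{m ∈ Icc 1 N | d ∣ m * (m + h)} := by
    rw [← card_roots_blocks h hd]
    refine card_le_card (filter_subset_filter _ fun m hm => ?_)
    simp only [mem_Ico, mem_Icc] at *
    omega
  have hge : #{m ∈ Icc 1 N | d ∣ m * (m + h)} ≤ q * rootCount h d + r := by
    rw [← card_roots_blocks h hd]
    have : #(Icc (1 + d * q) N) = r := by simp; omega
    rw [← this]
    refine (card_le_card ?_).trans (card_union_le _ _)
    intro m hm
    simp only [mem_union, mem_filter, mem_Ico, mem_Icc] at *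
    by_cases m < 1 + d * q
    · left; exact ⟨⟨hm.1.1, ‹_›⟩, hm.2⟩
    · right; omega
  have e : (rootCount h d : ℝ) / d * N = q * rootCount h d + rootCount h d / d * r := by
    rw [← hN]; push_cast; field_simp
  have h1 : (rootCount h d : ℝ) / d ≤ 1 := by
    rw [div_le_one hd']; exact_mod_cast rootCount_le h hd
  have h0 : (0 : ℝ) ≤ rootCount h d / d := by positivity
  have hle' : (q : ℝ) * rootCount h d ≤ #{m ∈ Icc 1 N | d ∣ m * (m + h)} := by exact_mod_cast hle
  have hge' : (#{m ∈ Icc 1 N | d ∣ m * (m + h)} : ℝ) ≤ q * rootCount h d + r := by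
    exact_mod_cast hge
  have hr' : (r : ℝ) ≤ d := by exact_mod_cast hr.le
  have hr0 : (0 : ℝ) ≤ r := by positivity
  have h2 : (rootCount h d : ℝ) / d * r ≤ r := by nlinarith
  have h3 : 0 ≤ (rootCount h d : ℝ) / d * r := by positivity
  rw [e, abs_le]
  constructor <;> linarith

/-- The sieving density `d ↦ rootCount h d / d`, with value `0` at `d = 0` by division by zero. -/
noncomputable def rootDensity (h : ℕ) : ArithmeticFunction ℝ :=
  ⟨fun d => rootCount h d / d, by simp⟩

theorem rootDensity_apply (h d : ℕ) : rootDensity h d = rootCount h d / d := rfl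

theorem rootDensity_mult (h : ℕ) : (rootDensity h).IsMultiplicative := by
  refine ⟨by simp [rootDensity_apply, rootCount_one], fun {m n} hmn => ?_⟩
  rw [rootDensity_apply, rootDensity_apply, rootDensity_apply, rootCount_mul h hmn]
  push_cast
  rw [mul_div_mul_comm]

/-- The primes up to `z` that do not divide `2 * h`. For these the density is `2 / p < 1`; the
finitely many primes left out affect constants only. -/
def sievePrimes (h z : ℕ) : Finset ℕ := {p ∈ range (z + 1) | p.Prime ∧ ¬ p ∣ 2 * h}

theorem prime_dvd_prod_sievePrimes {h z p : ℕ} (hp : p.Prime) :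
    p ∣ ∏ q ∈ sievePrimes h z, q ↔ p ≤ z ∧ ¬ p ∣ 2 * h := by
  rw [hp.prime.dvd_finsetProd_iff]
  constructor
  · rintro ⟨q, hq, hpq⟩
    simp only [sievePrimes, mem_filter, mem_range] at hq
    obtain rfl := (Nat.prime_dvd_prime_iff_eq hp hq.2.1).1 hpq
    exact ⟨by omega, hq.2.2⟩
  · rintro ⟨h1, h2⟩
    exact ⟨p, by simp [sievePrimes, hp, h2]; omega, dvd_rfl⟩

theorem squarefree_prod_primes {s : Finset ℕ} (hs : ∀ p ∈ s, p.Prime) :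
    Squarefree (∏ p ∈ s, p) := by
  refine Finset.squarefree_prod_of_pairwise_isCoprime ?_ fun p hp => (hs p hp).prime.squarefree
  intro p hp q hq hpq
  rw [Function.onFun, ← Nat.coprime_iff_isRelPrime]
  exact (Nat.coprime_primes (hs p hp) (hs q hq)).2 hpq

/-- The sieve problem for pairs: the products `m * (m + h)` with `1 ≤ m ≤ N` are sifted by the
primes up to `z` not dividing `2 * h`. -/
noncomputable def pairSieve (h N z : ℕ) : BoundingSieve where
  support := (Icc 1 N).image fun m => m * (m + h)
  prodPrimes := ∏ p ∈ sievePrimes h z, p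
  prodPrimes_squarefree := squarefree_prod_primes fun p hp => (mem_filter.mp hp).2.1
  weights := fun _ => 1
  weights_nonneg := fun _ => zero_le_one
  totalMass := N
  nu := rootDensity h
  nu_mult := rootDensity_mult h
  nu_pos_of_prime := fun p hp _ => by
    have := rootCount_pos h hp.ne_zero
    have := hp.pos
    rw [rootDensity_apply]; positivity
  nu_lt_one_of_prime := fun p hp hpP => by
    rw [prime_dvd_prod_sievePrimes hp] at hpP
    have h2 : p ≠ 2 := by rintro rfl; exact hpP.2 (dvd_mul_right _ _)
    have : 2 < p := lt_of_le_of_ne hp.two_le h2.symm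
    rw [rootDensity_apply, rootCount_prime hp fun H => hpP.2 (H.mul_left 2),
      div_lt_one (by exact_mod_cast hp.pos)]
    exact_mod_cast this

theorem mul_add_injective (h : ℕ) : Set.InjOn (fun m : ℕ => m * (m + h)) (Set.Ici 1) := by
  apply StrictMonoOn.injOn
  intro a _ b _ hab
  have : a < b := hab
  have hb : 0 < b + h := by omega
  calc a * (a + h) ≤ a * (b + h) := by gcongr
    _ < b * (b + h) := by gcongr

theorem pairSieve_rem_le (h N z d : ℕ) (hd : d ≠ 0) : |(pairSieve h N z).rem d| ≤ d := by
  have : (pairSieve h N z).multSum d = #{m ∈ Icc 1 N | d ∣ m * (m + h)} := by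
    simp only [BoundingSieve.multSum, pairSieve]
    rw [sum_image fun a ha b hb => 
      mul_add_injective h (mem_Icc.1 ha).1 (mem_Icc.1 hb).1]
    simp
  rw [BoundingSieve.rem, this]
  exact abs_card_roots_sub_le h N hd

/-- Prime pairs are either small or survive the sieve. -/
theorem card_prime_pairs_le_sifted (h N z : ℕ) :
    (#{p ∈ Icc 1 N | p.Prime ∧ (p + h).Prime} : ℝ) ≤ z + (pairSieve h N z).siftedSum := by
  have hs : (pairSieve h N z).siftedSum =
      #{m ∈ Icc 1 N | Nat.Coprime (∏ p ∈ sievePrimes h z, p) (m * (m + h))} := by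
    change (∑ d ∈ (Icc 1 N).image fun m => m * (m + h),
      if Nat.Coprime (∏ p ∈ sievePrimes h z, p) d then (1 : ℝ) else 0) = _
    rw [sum_image fun a ha b hb =>
      mul_add_injective h (mem_Icc.1 ha).1 (mem_Icc.1 hb).1, sum_boole]
  rw [hs]
  have : #{p ∈ Icc 1 N | p.Prime ∧ (p + h).Prime} ≤
      #(Icc 1 z) + #{m ∈ Icc 1 N | Nat.Coprime (∏ p ∈ sievePrimes h z, p) (m * (m + h))} := by
    refine (card_le_card ?_).trans (card_union_le _ _)
    intro p hp
    simp only [mem_union, mem_filter, mem_Icc] at *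
    by_cases hpz : p ≤ z
    · left; exact ⟨hp.1.1, hpz⟩
    · right
      refine ⟨hp.1, Nat.Coprime.prod_left fun q hq => ?_⟩
      simp only [sievePrimes, mem_filter, mem_range] at hq
      refine Nat.Coprime.mul_right ?_ ?_
      · exact (Nat.coprime_primes hq.2.1 hp.2.1).2 (by omega)
      · exact (Nat.coprime_primes hq.2.1 hp.2.2).2 (by omega)
  simp only [Nat.card_Icc, Nat.add_sub_cancel] at this
  exact_mod_cast this

/-- On squarefree moduli the density is `2 ^ ω(l) / l`, written here with the divisor count. -/
theorem pairSieve_nu {h N z l : ℕ} (hl : l ∣ (pairSieve h N z).prodPrimes) :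
    (pairSieve h N z).nu l = #l.divisors / l := by
  have hsq := BoundingSieve.squarefree_of_dvd_prodPrimes hl
  rw [← BoundingSieve.prod_primeFactors_nu hl]
  have : ∀ p ∈ l.primeFactors, (pairSieve h N z).nu p = 2 / p := by
    intro p hp
    have hpp := Nat.prime_of_mem_primeFactors hp
    have := (prime_dvd_prod_sievePrimes hpp).1 ((Nat.dvd_of_mem_primeFactors hp).trans hl)
    change rootDensity h p = _
    rw [rootDensity_apply, rootCount_prime hpp fun H => this.2 (H.mul_left 2)]
    norm_num
  rw [prod_congr rfl this, prod_div_distrib, ← Nat.cast_prod, Nat.prod_primeFactors_of_squarefree hsq,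
    Nat.card_divisors hsq.ne_zero]
  congr 1
  push_cast
  refine prod_congr rfl fun p hp => ?_
  rw [Nat.factorization_eq_one_of_squarefree hsq (Nat.prime_of_mem_primeFactors hp)
    (Nat.dvd_of_mem_primeFactors hp)]
  norm_num

/-! ### The lower bound for Selberg's denominator -/

theorem sum_le_sum_of_inj {ι κ : Type*} [DecidableEq κ] {s : Finset ι} {t : Finset κ}
    {f : ι → ℝ} {g : κ → ℝ} (i : ι → κ) (hi : ∀ x ∈ s, i x ∈ t) (hinj : Set.InjOn i s)
    (hfg : ∀ x ∈ s, f x ≤ g (i x)) (hg : ∀ y ∈ t, 0 ≤ g y) :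
    ∑ x ∈ s, f x ≤ ∑ y ∈ t, g y := by
  calc _ ≤ ∑ x ∈ s, g (i x) := sum_le_sum hfg
    _ = ∑ y ∈ s.image i, g y := (sum_image hinj).symm
    _ ≤ _ := sum_le_sum_of_subset_of_nonneg (image_subset_iff.2 hi) fun y hy _ => hg y hy

/-- Squarefree numbers up to `w` that are coprime to `M`. -/
def sqfreeCoprime (M w : ℕ) : Finset ℕ := {a ∈ Icc 1 w | Squarefree a ∧ a.Coprime M}

theorem mem_sqfreeCoprime {M w a : ℕ} :
    a ∈ sqfreeCoprime M w ↔ (1 ≤ a ∧ a ≤ w) ∧ Squarefree a ∧ a.Coprime M := by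
  simp [sqfreeCoprime]

theorem sum_inv_sq_le (w : ℕ) : ∑ b ∈ Icc 1 w, ((b : ℝ) ^ 2)⁻¹ ≤ 2 := by
  have := sum_Ioo_inv_sq_le (α := ℝ) 0 (w + 1)
  have e : Ioo 0 (w + 1) = Icc 1 w := by ext; simp; omega
  rw [e] at this
  simpa using this

/-- Writing `n = b ^ 2 * a` with `a` squarefree costs at most the factor `∑ 1 / b ^ 2 ≤ 2`. -/
theorem sum_inv_coprime_le (M w : ℕ) :
    ∑ n ∈ Icc 1 w with n.Coprime M, (n : ℝ)⁻¹ ≤ 2 * ∑ a ∈ sqfreeCoprime M w, (a : ℝ)⁻¹ := by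
  choose f g hfg hf using Nat.sq_mul_squarefree
  calc _ ≤ ∑ y ∈ Icc 1 w ×ˢ sqfreeCoprime M w, ((y.1 : ℝ) ^ 2)⁻¹ * (y.2 : ℝ)⁻¹ := by
        apply sum_le_sum_of_inj (fun n => (g n, f n))
        · intro n hn
          simp only [mem_filter, mem_Icc, mem_product, mem_sqfreeCoprime] at *
          have h1 := hfg n
          have hg0 : g n ≠ 0 := by intro h; rw [h] at h1; simp at h1; omega
          have hf0 : f n ≠ 0 := by intro h; rw [h] at h1; simp at h1; omega
          have hgn : g n ∣ n := (dvd_pow_self _ two_ne_zero).trans ⟨_, h1.symm⟩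
          have hfn : f n ∣ n := ⟨_, (mul_comm _ _).trans h1 |>.symm⟩
          have := Nat.le_of_dvd (by omega) hgn
          have := Nat.le_of_dvd (by omega) hfn
          exact ⟨⟨by omega, by omega⟩, ⟨by omega, by omega⟩, hf n, hn.2.coprime_dvd_left hfn⟩
        · intro a _ b _ hab
          simp only [Prod.mk.injEq] at hab
          rw [← hfg a, ← hfg b, hab.1, hab.2]
        · intro n _
          rw [← mul_inv]
          refine le_of_eq (congrArg _ ?_)
          exact_mod_cast (hfg n).symm
        · intro y _; positivity
    _ = (∑ b ∈ Icc 1 w, ((b : ℝ) ^ 2)⁻¹) * ∑ a ∈ sqfreeCoprime M w, (a : ℝ)⁻¹ := by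
        rw [sum_product, sum_mul]
        simp_rw [mul_sum]
    _ ≤ _ := by
        gcongr
        exact sum_inv_sq_le w

/-- A pair `(a, b)` of squarefree numbers with gcd `e` is recovered from `e`, the squarefree number
`l = (a / e) * (b / e)` and its divisor `a / e`, and `1 / (a * b) = 1 / (e ^ 2 * l)`. -/
theorem sq_sum_inv_le {M w z : ℕ} (hwz : w ^ 2 ≤ z) :
    (∑ a ∈ sqfreeCoprime M w, (a : ℝ)⁻¹) ^ 2 ≤
      2 * ∑ l ∈ sqfreeCoprime M z, (#l.divisors : ℝ) / l := by
  calc _ = ∑ x ∈ sqfreeCoprime M w ×ˢ sqfreeCoprime M w, (x.1 : ℝ)⁻¹ * (x.2 : ℝ)⁻¹ := by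
        rw [sq, sum_mul_sum, sum_product]
    _ ≤ ∑ y ∈ Icc 1 w ×ˢ (sqfreeCoprime M z).sigma fun l => l.divisors,
          ((y.1 : ℝ) ^ 2)⁻¹ * (y.2.1 : ℝ)⁻¹ := by
        apply sum_le_sum_of_inj (fun x => (x.1.gcd x.2,
          ⟨x.1 / x.1.gcd x.2 * (x.2 / x.1.gcd x.2), x.1 / x.1.gcd x.2⟩))
        · rintro ⟨a, b⟩ hx
          simp only [mem_product, mem_sqfreeCoprime, mem_sigma, mem_Icc, Nat.mem_divisors] at *
          obtain ⟨⟨⟨ha1, haw⟩, hasq, hac⟩, ⟨hb1, hbw⟩, hbsq, hbc⟩ := hx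
          have hg : 0 < a.gcd b := Nat.gcd_pos_of_pos_left _ ha1
          have hga := Nat.gcd_dvd_left a b
          have hgb := Nat.gcd_dvd_right a b
          have hda := Nat.div_dvd_of_dvd hga
          have hdb := Nat.div_dvd_of_dvd hgb
          have hpa : 0 < a / a.gcd b := Nat.div_pos (Nat.le_of_dvd ha1 hga) hg
          have hpb : 0 < b / a.gcd b := Nat.div_pos (Nat.le_of_dvd hb1 hgb) hg
          have hcop := Nat.coprime_div_gcd_div_gcd hg
          refine ⟨⟨hg, (Nat.le_of_dvd ha1 hga).trans haw⟩, ⟨⟨Nat.mul_pos hpa hpb, ?_⟩, ?_, ?_⟩,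
            dvd_mul_right _ _, (Nat.mul_pos hpa hpb).ne'⟩
          · calc _ ≤ w * w := Nat.mul_le_mul ((Nat.le_of_dvd ha1 hda).trans haw)
                  ((Nat.le_of_dvd hb1 hdb).trans hbw)
              _ ≤ z := by rwa [← sq]
          · exact (Nat.squarefree_mul hcop).2
              ⟨hasq.squarefree_of_dvd hda, hbsq.squarefree_of_dvd hdb⟩
          · exact Nat.Coprime.mul_left (hac.coprime_dvd_left hda) (hbc.coprime_dvd_left hdb)
        · rintro ⟨a, b⟩ hx ⟨a', b'⟩ hx' h
          simp only [mem_coe, mem_product, mem_sqfreeCoprime] at hx hx'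
          simp only [Prod.mk.injEq, Sigma.mk.injEq, heq_eq_eq] at h
          obtain ⟨h1, h2, h3⟩ := h
          have ha := Nat.div_mul_cancel (Nat.gcd_dvd_left a b)
          have hb := Nat.div_mul_cancel (Nat.gcd_dvd_right a b)
          have ha' := Nat.div_mul_cancel (Nat.gcd_dvd_left a' b')
          have hb' := Nat.div_mul_cancel (Nat.gcd_dvd_right a' b')
          have hpos : 0 < a / a.gcd b := Nat.div_pos
            (Nat.le_of_dvd (by omega) (Nat.gcd_dvd_left a b))
            (Nat.gcd_pos_of_pos_left _ (by omega))
          rw [← h3] at h2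
          have h4 := Nat.eq_of_mul_eq_mul_left hpos h2
          have e1 : a = a' := by rw [← ha, ← ha', h3, h1]
          have e2 : b = b' := by rw [← hb, ← hb', h4, h1]
          rw [e1, e2]
        · rintro ⟨a, b⟩ hx
          simp only [mem_product, mem_sqfreeCoprime] at hx
          have ha := Nat.div_mul_cancel (Nat.gcd_dvd_left a b)
          have hb := Nat.div_mul_cancel (Nat.gcd_dvd_right a b)
          rw [← mul_inv, ← mul_inv]
          refine le_of_eq (congrArg _ ?_)
          have : a * b = a.gcd b ^ 2 * (a / a.gcd b * (b / a.gcd b)) := by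
            calc a * b = (a / a.gcd b * a.gcd b) * (b / a.gcd b * a.gcd b) := by rw [ha, hb]
              _ = _ := by ring
          exact_mod_cast this
        · intro y _; positivity
    _ = (∑ e ∈ Icc 1 w, ((e : ℝ) ^ 2)⁻¹) * ∑ l ∈ sqfreeCoprime M z, (#l.divisors : ℝ) / l := by
        rw [sum_product, sum_mul]
        refine sum_congr rfl fun e _ => ?_
        dsimp only
        rw [← mul_sum, sum_sigma]
        congr 1
        refine sum_congr rfl fun l _ => ?_
        dsimp only
        rw [sum_const, nsmul_eq_mul, div_eq_mul_inv]
    _ ≤ _ := by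
        gcongr
        exact sum_inv_sq_le w

/-- The integers congruent to `1` modulo `M` already give a multiple of the harmonic sum. -/
theorem log_le_sum_inv_coprime {M : ℕ} (hM : 0 < M) (J : ℕ) :
    Real.log (J + 1) / M ≤ ∑ n ∈ Icc 1 (M * J) with n.Coprime M, (n : ℝ)⁻¹ := by
  have hM' : (0 : ℝ) < M := by exact_mod_cast hM
  have h1 : Real.log (J + 1) ≤ ∑ j ∈ range J, ((j + 1 : ℕ) : ℝ)⁻¹ := by
    have := log_add_one_le_harmonic J
    simpa [harmonic] using this
  calc _ ≤ (∑ j ∈ range J, ((j + 1 : ℕ) : ℝ)⁻¹) / M := by gcongr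
    _ = ∑ j ∈ range J, ((M * (j + 1) : ℕ) : ℝ)⁻¹ := by
        rw [sum_div]
        refine sum_congr rfl fun j _ => ?_
        push_cast
        field_simp
    _ ≤ _ := by
        apply sum_le_sum_of_inj (fun j => M * j + 1)
        · intro j hj
          have := mem_range.1 hj
          simp only [mem_filter, mem_Icc]
          refine ⟨⟨by omega, ?_⟩, by simp⟩
          calc M * j + 1 ≤ M * j + M := by omega
            _ = M * (j + 1) := by ring
            _ ≤ M * J := by gcongr; omega
        · intro a _ b _ hab
          exact Nat.eq_of_mul_eq_mul_left hM (Nat.succ_injective hab)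
        · intro j _
          have : M * j + 1 ≤ M * (j + 1) := by rw [mul_add]; omega
          gcongr
        · intro y _; positivity

/-- The denominator is at least `∑ 2 ^ ω(l) / l` over squarefree `l ≤ z` coprime to `2 * h`, because
`g l ≥ ν l`; that sum has order `(log z) ^ 2`. -/
theorem selbergSum_pairSieve_ge {h : ℕ} (hh : 0 < h) (N J : ℕ) :
    Real.log (J + 1) ^ 2 / (32 * h ^ 2) ≤ (pairSieve h N ((2 * h * J) ^ 2)).selbergSum
      ((2 * h * J) ^ 2) := by
  have hh' : (0 : ℝ) < h := by exact_mod_cast hh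
  have hM : 0 < 2 * h := by omega
  set z := (2 * h * J) ^ 2 with hz
  have h1 := log_le_sum_inv_coprime hM J
  have h2 := sum_inv_coprime_le (2 * h) (2 * h * J)
  have h3 := sq_sum_inv_le (M := 2 * h) (w := 2 * h * J) le_rfl
  rw [← hz] at h3
  have h4 : ∑ l ∈ sqfreeCoprime (2 * h) z, (#l.divisors : ℝ) / l ≤
      (pairSieve h N z).selbergSum z := by
    have hdvd : ∀ l ∈ sqfreeCoprime (2 * h) z, l ∣ (pairSieve h N z).prodPrimes := by
      intro l hl
      rw [mem_sqfreeCoprime] at hl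
      rw [← Nat.prod_primeFactors_of_squarefree hl.2.1]
      change ∏ p ∈ l.primeFactors, p ∣ ∏ p ∈ sievePrimes h z, p
      refine prod_dvd_prod_of_subset _ _ (fun p : ℕ => p) fun p hp => ?_
      have hpp := Nat.prime_of_mem_primeFactors hp
      have hpl := Nat.dvd_of_mem_primeFactors hp
      have := Nat.le_of_dvd hl.1.1 hpl
      rw [sievePrimes, mem_filter, mem_range]
      exact ⟨by omega, hpp, fun H => hpp.one_lt.ne' (Nat.eq_one_of_dvd_coprimes hl.2.2 hpl H)⟩
    calc _ ≤ ∑ l ∈ sqfreeCoprime (2 * h) z, (pairSieve h N z).selbergTerms l := by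
          refine sum_le_sum fun l hl => ?_
          have hl' := hdvd l hl
          rw [BoundingSieve.selbergTerms_apply, ← pairSieve_nu hl']
          refine le_mul_of_one_le_right (BoundingSieve.nu_pos_of_dvd_prodPrimes hl').le ?_
          refine prod_induction _ (fun t : ℝ => 1 ≤ t) (fun a b => one_le_mul_of_one_le_of_one_le)
            le_rfl fun p hp => ?_
          have hpP := (Nat.dvd_of_mem_primeFactors hp).trans hl'
          have hpp := Nat.prime_of_mem_primeFactors hp
          have h0 := (pairSieve h N z).nu_pos_of_prime p hpp hpP
          have h1 := (pairSieve h N z).nu_lt_one_of_prime p hpp hpP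
          exact (one_le_inv₀ (by linarith)).2 (by linarith)
      _ ≤ _ := by
          refine sum_le_sum_of_subset_of_nonneg (fun l hl => ?_) fun l hl _ => ?_
          · rw [mem_filter, Nat.mem_divisors]
            exact ⟨⟨hdvd l hl, BoundingSieve.prodPrimes_ne_zero⟩, (mem_sqfreeCoprime.1 hl).1.2⟩
          · exact (BoundingSieve.selbergTerms_pos
              (Nat.dvd_of_mem_divisors (mem_filter.1 hl).1)).le
  have hlog : 0 ≤ Real.log (J + 1) := Real.log_nonneg (by simp)
  set T := ∑ a ∈ sqfreeCoprime (2 * h) (2 * h * J), (a : ℝ)⁻¹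
  have h5 : Real.log (J + 1) / (4 * h) ≤ T := by
    have := h1.trans h2
    push_cast at this
    rw [div_le_iff₀ (by positivity)] at this ⊢
    linarith
  have h6 : (Real.log (J + 1) / (4 * h)) ^ 2 ≤ T ^ 2 := by gcongr
  have h7 : Real.log (J + 1) ^ 2 / (32 * h ^ 2) = (Real.log (J + 1) / (4 * h)) ^ 2 / 2 := by
    field_simp; ring
  rw [h7]
  linarith

/-! ### Prime pairs with a fixed difference -/

/-- There are `O_h(N / (log N) ^ 2)` primes `p ≤ N` for which `p + h` is prime. -/
theorem prime_pairs_bound {h : ℕ} (hh : 0 < h) {N : ℕ} (hN : 2 ≤ N) :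
    (#{p ∈ Icc 1 N | p.Prime ∧ (p + h).Prime} : ℝ) ≤
      (16 * (2 * h) ^ 2 + 16 * (2 * h) ^ 12 + 32 * h ^ 2 * 576) * (N / Real.log N ^ 2) := by
  have hN0 : (0 : ℝ) ≤ N := by positivity
  have hN1 : (1 : ℝ) < N := by exact_mod_cast hN
  have hlogN : 0 < Real.log N := Real.log_pos hN1
  have hh' : (0 : ℝ) < h := by exact_mod_cast hh
  -- The exponent `1 / 24` makes the error term `z ^ 6`, of order `x ^ 12`, as small as `√N`.
  set x : ℝ := (N : ℝ) ^ (1 / 24 : ℝ) with hx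
  have hx1 : 1 ≤ x := Real.one_le_rpow hN1.le (by norm_num)
  have hx24 : x ^ 24 = N := by
    rw [hx, ← Real.rpow_natCast, ← Real.rpow_mul hN0]; norm_num
  set J := ⌊x⌋₊
  have hJx : (J : ℝ) ≤ x := Nat.floor_le (by linarith)
  have hxJ : x < J + 1 := Nat.lt_floor_add_one x
  have hJ1 : 1 ≤ J := Nat.le_floor (by simpa using hx1)
  set z := (2 * h * J) ^ 2 with hz
  have hz1 : 1 ≤ z := Nat.one_le_pow _ _ (by positivity)
  have hlogx : Real.log N / 24 ≤ Real.log (J + 1) := by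
    have : Real.log N = 24 * Real.log x := by rw [← hx24, Real.log_pow]; norm_num
    have : Real.log x ≤ Real.log (J + 1) := Real.log_le_log (by linarith) hxJ.le
    linarith
  have hsmall : x ^ 12 ≤ 16 * (N / Real.log N ^ 2) := by
    have h1 : Real.log N ≤ 4 * x ^ 6 := by
      have := Real.log_le_rpow_div hN0 (ε := 1 / 4) (by norm_num)
      have e : (N : ℝ) ^ (1 / 4 : ℝ) = x ^ 6 := by
        rw [hx, ← Real.rpow_natCast, ← Real.rpow_mul hN0]; norm_num
      rw [e] at this
      linarith
    have h2 : Real.log N ^ 2 ≤ 16 * x ^ 12 := by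
      calc _ ≤ (4 * x ^ 6) ^ 2 := by gcongr
        _ = _ := by ring
    rw [← mul_div_assoc, le_div_iff₀ (pow_pos hlogN 2)]
    calc x ^ 12 * Real.log N ^ 2 ≤ x ^ 12 * (16 * x ^ 12) := by gcongr
      _ = 16 * x ^ 24 := by ring
      _ = _ := by rw [hx24]
  have hS : Real.log N ^ 2 / (32 * h ^ 2 * 576) ≤ (pairSieve h N z).selbergSum z := by
    refine le_trans ?_ (selbergSum_pairSieve_ge hh N J)
    calc _ = (Real.log N / 24) ^ 2 / (32 * h ^ 2) := by field_simp; ring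
      _ ≤ _ := by gcongr
  have hP0 : (pairSieve h N z).prodPrimes ≠ 0 := BoundingSieve.prodPrimes_ne_zero
  have hsel := BoundingSieve.siftedSum_le_selberg (s := pairSieve h N z) hz1
    (fun d hd => by
      have hd0 := ne_zero_of_dvd_ne_zero hP0 hd
      have hd0' : (0 : ℝ) < d := by positivity
      have h1 : (1 : ℝ) ≤ rootCount h d := by exact_mod_cast rootCount_pos h hd0
      change (rootDensity h d)⁻¹ ≤ d
      rw [rootDensity_apply, inv_div]
      exact div_le_self hd0'.le h1)
    (fun d hd => pairSieve_rem_le h N z d (ne_zero_of_dvd_ne_zero hP0 hd))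
  have hmain : (pairSieve h N z).totalMass / (pairSieve h N z).selbergSum z ≤
      32 * h ^ 2 * 576 * (N / Real.log N ^ 2) := by
    change (N : ℝ) / _ ≤ _
    calc _ ≤ (N : ℝ) / (Real.log N ^ 2 / (32 * h ^ 2 * 576)) := by gcongr
      _ = _ := by field_simp
  have hzx : (z : ℝ) ≤ (2 * h) ^ 2 * x ^ 12 := by
    rw [hz]; push_cast
    calc (2 * (h : ℝ) * J) ^ 2 ≤ (2 * h * x) ^ 2 := by gcongr
      _ = (2 * h) ^ 2 * x ^ 2 := by ring
      _ ≤ _ := by gcongr; norm_num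
  have hzx6 : (z : ℝ) ^ 6 ≤ (2 * h) ^ 12 * x ^ 12 := by
    rw [hz]; push_cast
    calc ((2 * (h : ℝ) * J) ^ 2) ^ 6 ≤ ((2 * h * x) ^ 2) ^ 6 := by gcongr
      _ = _ := by ring
  have hcard := card_prime_pairs_le_sifted h N z
  have h8 : (2 * (h : ℝ)) ^ 2 * x ^ 12 ≤ (2 * h) ^ 2 * (16 * (N / Real.log N ^ 2)) := by gcongr
  have h9 : (2 * (h : ℝ)) ^ 12 * x ^ 12 ≤ (2 * h) ^ 12 * (16 * (N / Real.log N ^ 2)) := by gcongr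
  linarith

/-! ### Missing values of the prime-counting function -/

/-- A lower bound of Chebyshev type. -/
theorem primeCounting_lower {N : ℕ} (hN : 3 ≤ N) :
    (N : ℝ) / (5 * Real.log N) ≤ Nat.primeCounting N := by
  have hN3 : (3 : ℝ) ≤ N := by exact_mod_cast hN
  have hlog : 0 < Real.log N := Real.log_pos (by linarith)
  have h2 := Real.log_two_gt_d9
  -- The tangent line of `log` at `4` is sharp enough to reach all `N ≥ 3`.
  have h1 : Real.log (N + 1) ≤ (N + 1) / 4 - 1 + 2 * Real.log 2 := by
    have h3 := Real.log_le_sub_one_of_pos (x := ((N : ℝ) + 1) / 4) (by positivity)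
    rw [Real.log_div (by positivity) (by norm_num), show (4 : ℝ) = 2 ^ 2 by norm_num,
      Real.log_pow] at h3
    push_cast at h3
    norm_num at h3 ⊢
    linarith
  refine le_trans ?_ (Chebyshev.pi_ge N)
  rw [← div_div]
  gcongr
  nlinarith [mul_nonneg (sub_nonneg.2 hN3) (sub_nonneg.2 h2.le)]

/-- If `a` is not a value `π (k * n)`, then the gap after the `a`-th prime is less than `n`:
otherwise the least multiple of `n` that is at least this prime lies before the next one. Since
`Nat.nth` counts from `0`, the `a`-th prime is `Nat.nth Nat.Prime (a - 1)`. -/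
theorem gap_lt_of_not_mem {n a : ℕ} (hn : 0 < n) (ha : 1 ≤ a)
    (hmiss : ¬ ∃ k : ℕ, 0 < k ∧ Nat.primeCounting (k * n) = a) :
    Nat.nth Nat.Prime a < Nat.nth Nat.Prime (a - 1) + n := by
  by_contra! hgap
  apply hmiss
  set p := Nat.nth Nat.Prime (a - 1)
  have hp : p.Prime := Nat.prime_nth_prime _
  have hmod : p + n - 1 - (p + n - 1) % n = (p + n - 1) / n * n := by
    have := Nat.div_add_mod' (p + n - 1) n
    omega
  have hlt := Nat.mod_lt (p + n - 1) hn
  have hpos := hp.two_le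
  refine ⟨(p + n - 1) / n, Nat.div_pos (by omega) hn, ?_⟩
  rw [← hmod]
  apply le_antisymm
  · rw [Nat.primeCounting, Nat.primeCounting', ← Nat.lt_succ_iff]
    have : Nat.count Nat.Prime (Nat.nth Nat.Prime a) = a := Nat.primeCounting'_nth_eq a
    calc _ ≤ Nat.count Nat.Prime (Nat.nth Nat.Prime a) := Nat.count_monotone _ (by omega)
      _ = a := this
      _ < _ := Nat.lt_succ_self a
  · have h1 : Nat.primeCounting p = a := by
      have : Nat.count Nat.Prime p = a - 1 := Nat.primeCounting'_nth_eq (a - 1)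
      rw [Nat.primeCounting, Nat.primeCounting', Nat.count_succ, this, if_pos hp]
      omega
    calc a = Nat.primeCounting p := h1.symm
      _ ≤ _ := Nat.monotone_primeCounting (by omega)

open Classical in
/-- The `a`-th prime, for a missing value `a`, is the lower member of a prime pair with difference
less than `n`. -/
theorem card_missing_le {n : ℕ} (hn : 0 < n) (N : ℕ) :
    #{a ∈ Icc 1 (Nat.primeCounting N) |
        a ∉ {m : ℕ | ∃ k : ℕ, 0 < k ∧ Nat.primeCounting (k * n) = m}} ≤
      ∑ h ∈ Ico 1 n, #{p ∈ Icc 1 N | p.Prime ∧ (p + h).Prime} := by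
  refine le_trans ?_ card_biUnion_le
  refine card_le_card_of_injOn (fun a => Nat.nth Nat.Prime (a - 1)) ?_ ?_
  · intro a ha
    simp only [mem_coe, mem_filter, mem_Icc, Set.mem_ofPred_eq] at ha
    obtain ⟨⟨ha1, haN⟩, hmiss⟩ := ha
    have hgap := gap_lt_of_not_mem hn ha1 hmiss
    have hlt : Nat.nth Nat.Prime (a - 1) < Nat.nth Nat.Prime a :=
      Nat.nth_strictMono Nat.infinite_setOfPred_prime (by omega)
    have hp := Nat.prime_nth_prime (a - 1)
    have hle : Nat.nth Nat.Prime (a - 1) < N + 1 :=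
      Nat.nth_lt_of_lt_count (p := Nat.Prime) (lt_of_lt_of_le (by omega) haN)
    simp only [coe_biUnion, Set.mem_iUnion, mem_coe, mem_filter, mem_Icc, mem_Ico]
    refine ⟨Nat.nth Nat.Prime a - Nat.nth Nat.Prime (a - 1), by omega,
      ⟨hp.one_le, by omega⟩, hp, ?_⟩
    rw [Nat.add_sub_cancel' hlt.le]
    exact Nat.prime_nth_prime a
  · intro a ha b hb hab
    simp only [mem_coe, mem_filter, mem_Icc] at ha hb
    have := (Nat.nth_strictMono Nat.infinite_setOfPred_prime).injective hab
    omega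

end

open Classical in
theorem stmt_7 (n : ℕ) (hn : 0 < n) :
    ∃ C : ℝ, 0 < C ∧ ∀ K : ℕ, 3 ≤ K →
      (((Finset.Icc 1 (Nat.primeCounting (K * n))).filter
          (fun a => a ∉ {m : ℕ | ∃ k : ℕ, 0 < k ∧ Nat.primeCounting (k * n) = m})).card : ℝ) ≤
        C * (Nat.primeCounting (K * n) : ℝ) / Real.log (Nat.primeCounting (K * n)) := by
  set c : ℕ → ℝ := fun h => 16 * (2 * h) ^ 2 + 16 * (2 * h) ^ 12 + 32 * h ^ 2 * 576 with hc
  have hc0 : 0 ≤ ∑ h ∈ Finset.Ico 1 n, c h := Finset.sum_nonneg fun h _ => by positivity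
  refine ⟨5 * ∑ h ∈ Finset.Ico 1 n, c h + 1, by positivity, fun K hK => ?_⟩
  set N := K * n with hN
  have hN3 : 3 ≤ N := by nlinarith
  have hN3' : (3 : ℝ) ≤ N := by exact_mod_cast hN3
  have hlogN : 0 < Real.log N := Real.log_pos (by linarith)
  have hX2 : 2 ≤ Nat.primeCounting N := by
    have h3 : Nat.primeCounting 3 = 2 := by decide
    exact h3.symm.le.trans (Nat.monotone_primeCounting hN3)
  have hXN : Nat.primeCounting N ≤ N := by
    rw [← Nat.primesLE_card_eq_primeCounting, Nat.primesLE_eq_filter_Icc_one]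
    exact (Finset.card_filter_le _ _).trans (by simp)
  set X := Nat.primeCounting N
  have hX2' : (2 : ℝ) ≤ X := by exact_mod_cast hX2
  have hlogX : 0 < Real.log X := Real.log_pos (by linarith)
  have hlogXN : Real.log X ≤ Real.log N :=
    Real.log_le_log (by linarith) (by exact_mod_cast hXN)
  have hmain : (N : ℝ) / Real.log N ^ 2 ≤ 5 * (X / Real.log X) := by
    calc (N : ℝ) / Real.log N ^ 2 = 5 * ((N / (5 * Real.log N)) / Real.log N) := by field_simp
      _ ≤ 5 * (X / Real.log X) := by
        have := primeCounting_lower hN3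
        gcongr
  calc _ ≤ ∑ h ∈ Finset.Ico 1 n, ((Finset.filter (fun p => p.Prime ∧ (p + h).Prime) (Finset.Icc 1 N)).card : ℝ) := by
        exact_mod_cast card_missing_le hn N
    _ ≤ ∑ h ∈ Finset.Ico 1 n, c h * (N / Real.log N ^ 2) := Finset.sum_le_sum fun h hh =>
        prime_pairs_bound (Finset.mem_Ico.1 hh).1 (by omega)
    _ = (∑ h ∈ Finset.Ico 1 n, c h) * (N / Real.log N ^ 2) := (Finset.sum_mul _ _ _).symm
    _ ≤ (∑ h ∈ Finset.Ico 1 n, c h) * (5 * (X / Real.log X)) := by gcongr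
    _ ≤ (5 * ∑ h ∈ Finset.Ico 1 n, c h + 1) * (X / Real.log X) := by
        have : 0 ≤ (X : ℝ) / Real.log X := by positivity
        linarith
    _ = _ := by rw [mul_div_assoc]
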